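/- arXiv:1202.2559 — 4 statements merged into one kernel-verified Lean document; each statement's English description precedes it below -/
import Mathlib

section
/- Let φ₀ ∈ (−1, 1), σ₀² > 0 and set γ₀² = σ₀²/(1 − φ₀²). Define on {(φ, s) : φ ∈ (−1, 1), s > 0} the function F(φ, s) = φ² γ/(4√π) − √(2/π) · φ φ₀ γ² γ₀²/(γ² + γ₀²)^{3/2}, where γ² = s/(1 − φ²) and γ = √(s/(1 − φ²)). Then both partial derivatives ∂F/∂φ and ∂F/∂s vanish at the point (φ₀, σ₀²). -/
open Real

/-- The limit contrast function `F(φ, s) = P m_θ` of the Gaussian AR(1) model with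
measurement noise, where `γ = √(s/(1 − φ²))` and `γ₀² = σ₀²/(1 − φ₀²)`. -/
noncomputable def limitContrast (φ₀ σ₀2 : ℝ) (φ s : ℝ) : ℝ :=
  φ ^ 2 * Real.sqrt (s / (1 - φ ^ 2)) / (4 * Real.sqrt Real.pi)
    - Real.sqrt (2 / Real.pi) * φ * φ₀ * (Real.sqrt (s / (1 - φ ^ 2))) ^ 2
        * (σ₀2 / (1 - φ₀ ^ 2))
        / ((Real.sqrt (s / (1 - φ ^ 2))) ^ 2 + σ₀2 / (1 - φ₀ ^ 2)) ^ ((3 : ℝ) / 2)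

/-! Writing `f_g` for the centred Gaussian density of standard deviation `g` and
`l_θ(x) = φ x f_γ(x)`, the contrast is `F(θ) = ‖l_θ‖² - 2⟪l_θ, l_θ₀⟫ = ‖l_θ - l_θ₀‖² - ‖l_θ₀‖²` in
`L²(ℝ)`. Hence `θ₀` is a global minimum of `F`, and the partial derivatives vanish there. With the
inner products in closed form, the Cauchy–Schwarz inequality behind this minimality amounts to
`(2gk)³ ≤ (g² + k²)³`. -/

/-- The stationary standard deviation `γ` of the AR(1) process with autoregression coefficient `φ`
and innovation variance `s`. -/
noncomputable def stationaryStd (φ s : ℝ) : ℝ :=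
  √(s / (1 - φ ^ 2))

lemma stationaryStd_nonneg (φ s : ℝ) : 0 ≤ stationaryStd φ s :=
  sqrt_nonneg _

/-- The inner product in `L²(ℝ)` of `x ↦ x f_g(x)` and `x ↦ x f_k(x)`, where `f_g` is the centred
Gaussian density of standard deviation `g > 0`, encoded by the value of the integral; it vanishes
when `g = 0` or `k = 0`. -/
noncomputable def gaussianMomentInner (g k : ℝ) : ℝ :=
  g ^ 2 * k ^ 2 / (√(2 * π) * (g ^ 2 + k ^ 2) ^ ((3 : ℝ) / 2))

lemma gaussianMomentInner_nonneg (g k : ℝ) : 0 ≤ gaussianMomentInner g k := by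
  unfold gaussianMomentInner
  positivity

lemma sq_rpow_three_halves {x : ℝ} (hx : 0 ≤ x) : (x ^ 2) ^ ((3 : ℝ) / 2) = x ^ 3 := by
  rw [← rpow_natCast_mul hx, ← rpow_natCast]
  norm_num

lemma rpow_three_halves_sq {x : ℝ} (hx : 0 ≤ x) : (x ^ ((3 : ℝ) / 2)) ^ 2 = x ^ 3 := by
  rw [← rpow_mul_natCast hx, ← rpow_natCast]
  norm_num

lemma gaussianMomentInner_self {g : ℝ} (hg : 0 ≤ g) :
    gaussianMomentInner g g = g / (4 * √π) := by
  rcases hg.eq_or_lt with rfl | hg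
  · simp [gaussianMomentInner]
  have two_sq : g ^ 2 + g ^ 2 = (√2 * g) ^ 2 := by
    rw [mul_pow, sq_sqrt zero_le_two, two_mul]
  have denom : √(2 * π) * (√2 * g) ^ 3 = 4 * √π * g ^ 3 := by
    rw [sqrt_mul zero_le_two]
    linear_combination √π * g ^ 3 * (√2 ^ 2 + 2) * sq_sqrt (zero_le_two (α := ℝ))
  rw [gaussianMomentInner, two_sq, sq_rpow_three_halves (by positivity), denom]
  field_simp

lemma gaussianMomentInner_sq_le {g k : ℝ} (hg : 0 ≤ g) (hk : 0 ≤ k) :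
    gaussianMomentInner g k ^ 2 ≤ gaussianMomentInner g g * gaussianMomentInner k k := by
  have amgm : (2 * g * k) ^ 3 ≤ (g ^ 2 + k ^ 2) ^ 3 :=
    pow_le_pow_left₀ (by positivity) (two_mul_le_add_sq g k) 3
  rw [gaussianMomentInner_self hg, gaussianMomentInner_self hk]
  calc gaussianMomentInner g k ^ 2
      = g * k / (16 * π) * ((2 * g * k) ^ 3 / (g ^ 2 + k ^ 2) ^ 3) := by
        rw [gaussianMomentInner, div_pow, mul_pow √(2 * π), sq_sqrt (by positivity),
          rpow_three_halves_sq (by positivity), ← div_div]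
        ring
    _ ≤ g * k / (16 * π) := mul_le_of_le_one_right (by positivity)
        (div_le_one_of_le₀ amgm (by positivity))
    _ = g / (4 * √π) * (k / (4 * √π)) := by
        rw [div_mul_div_comm, mul_mul_mul_comm, mul_self_sqrt pi_pos.le]
        norm_num

lemma two_mul_mul_mul_le_of_sq_le_mul {R : Type*} [CommRing R] [LinearOrder R]
    [IsStrictOrderedRing R] {a b c : R} (ha : 0 ≤ a) (hc : 0 ≤ c) (h : b ^ 2 ≤ a * c) (p q : R) :
    2 * p * q * b ≤ p ^ 2 * a + q ^ 2 * c := by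
  refine le_of_sq_le_sq ?_ (by positivity)
  calc (2 * p * q * b) ^ 2 = 4 * (p * q) ^ 2 * b ^ 2 := by ring
    _ ≤ 4 * (p * q) ^ 2 * (a * c) := by gcongr
    _ = 4 * (p ^ 2 * a) * (q ^ 2 * c) := by ring
    _ ≤ (p ^ 2 * a + q ^ 2 * c) ^ 2 := four_mul_le_sq_add _ _

lemma limitContrast_eq_gaussianMomentInner {φ₀ σ₀2 : ℝ} (h : 0 ≤ σ₀2 / (1 - φ₀ ^ 2)) (φ s : ℝ) :
    limitContrast φ₀ σ₀2 φ s =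
      φ ^ 2 * gaussianMomentInner (stationaryStd φ s) (stationaryStd φ s)
        - 2 * φ * φ₀ * gaussianMomentInner (stationaryStd φ s) (stationaryStd φ₀ σ₀2) := by
  have const : √(2 / π) = 2 / √(2 * π) := by
    rw [sqrt_div zero_le_two, sqrt_mul zero_le_two, ← div_div, div_sqrt]
  rw [gaussianMomentInner_self (stationaryStd_nonneg φ s), gaussianMomentInner, limitContrast,
    const]
  simp only [stationaryStd, sq_sqrt h]
  ring

theorem limitContrast_self_le {φ₀ σ₀2 : ℝ} (h : 0 ≤ σ₀2 / (1 - φ₀ ^ 2)) (φ s : ℝ) :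
    limitContrast φ₀ σ₀2 φ₀ σ₀2 ≤ limitContrast φ₀ σ₀2 φ s := by
  have hγ := stationaryStd_nonneg φ s
  have hγ₀ := stationaryStd_nonneg φ₀ σ₀2
  have cauchy_schwarz := two_mul_mul_mul_le_of_sq_le_mul (gaussianMomentInner_nonneg _ _)
    (gaussianMomentInner_nonneg _ _) (gaussianMomentInner_sq_le hγ hγ₀) φ φ₀
  rw [limitContrast_eq_gaussianMomentInner h, limitContrast_eq_gaussianMomentInner h]
  linarith

/-- Both partial derivatives of the limit contrast function vanish at the true
parameter `(φ₀, σ₀²)`. -/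
theorem stmt6 (φ₀ σ₀2 : ℝ) (hφ : -1 < φ₀ ∧ φ₀ < 1) (hσ : 0 < σ₀2) :
    deriv (fun p : ℝ => limitContrast φ₀ σ₀2 p σ₀2) φ₀ = 0
    ∧ deriv (fun s : ℝ => limitContrast φ₀ σ₀2 φ₀ s) σ₀2 = 0 := by
  have one_sub_sq_pos : 0 < 1 - φ₀ ^ 2 := sub_pos.2 ((sq_lt_one_iff_abs_lt_one φ₀).2 (abs_lt.2 hφ))
  have minimal := limitContrast_self_le (div_pos hσ one_sub_sq_pos).le
  have local_min_coeff : IsLocalMin (fun p => limitContrast φ₀ σ₀2 p σ₀2) φ₀ :=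
    .of_forall fun p => minimal p σ₀2
  have local_min_variance : IsLocalMin (fun s => limitContrast φ₀ σ₀2 φ₀ s) σ₀2 :=
    .of_forall fun s => minimal φ₀ s
  exact ⟨local_min_coeff.deriv_eq_zero, local_min_variance.deriv_eq_zero⟩
end

section
/- Let φ₀ ∈ (−1, 1), σ₀² > 0 and set γ₀² = σ₀²/(1 − φ₀²), γ₀ = √(γ₀²). Define on {(φ, s) : φ ∈ (−1, 1), s > 0} the function F(φ, s) = φ² γ/(4√π) − √(2/π) · φ φ₀ γ² γ₀²/(γ² + γ₀²)^{3/2}, where γ = √(s/(1 − φ²)). Then the Hessian matrix of F at the point (φ₀, σ₀²) equals (1/(8√π (1 − φ₀²)²)) · [[γ₀(7φ₀⁴ − 4φ₀² + 4), (−5φ₀⁵ + 3φ₀³ + 2φ₀)/(2γ₀(1 − φ₀²))], [(−5φ₀⁵ + 3φ₀³ + 2φ₀)/(2γ₀(1 − φ₀²)), 7φ₀²/(4γ₀³)]]. -/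
/-!
In the coordinates `(φ, γ)` the contrast is `Φ(φ, γ) = (φ²γ - 4√2 φ φ₀ γ₀² h(γ)) / (4√π)` with
`h(γ) = γ² / (γ² + γ₀²)^(3/2)`, and `(φ₀, γ₀)` is a critical point of `Φ`. The Hessian at a critical
point transforms as a tensor, so the second derivatives of `γ` as a function of `(φ, s)` do not
contribute: the Hessian of the contrast in `(φ, s)` is the pullback of
`(1 / (4√π)) [[2γ₀, φ₀], [φ₀, 7φ₀²/(2γ₀)]]` along the first derivative of `(φ, s) ↦ (φ, γ)`.
-/

open Real

open Topology ContinuousLinearMap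

section SecondFDeriv

variable {𝕜 E F : Type*} [NontriviallyNormedField 𝕜] [NormedAddCommGroup E] [NormedSpace 𝕜 E]
  [NormedAddCommGroup F] [NormedSpace 𝕜 F]

/-- The scalar function `f` has gradient `f'` and Hessian `f''` at `x`: it is Fréchet differentiable
near `x`, and its derivative is differentiable at `x`. The gradient is recorded along with the
Hessian because the product and chain rules for the latter involve it. -/
def HasSecondFDerivAt (f : E → 𝕜) (f' : E →L[𝕜] 𝕜) (f'' : E →L[𝕜] E →L[𝕜] 𝕜) (x : E) : Prop :=
  ∃ G : E → E →L[𝕜] 𝕜, (∀ᶠ z in 𝓝 x, HasFDerivAt f (G z) z) ∧ G x = f' ∧ HasFDerivAt G f'' x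

namespace HasSecondFDerivAt

variable {f g : E → 𝕜} {f' g' : E →L[𝕜] 𝕜} {f'' g'' : E →L[𝕜] E →L[𝕜] 𝕜} {x : E}

theorem of_clm (L : E →L[𝕜] 𝕜) (x : E) : HasSecondFDerivAt L L 0 x :=
  ⟨fun _ => L, .of_forall fun _ => L.hasFDerivAt, rfl, hasFDerivAt_const L x⟩

theorem congr_fderiv {f₁' : E →L[𝕜] 𝕜} {f₁'' : E →L[𝕜] E →L[𝕜] 𝕜}
    (hf : HasSecondFDerivAt f f' f'' x) (h' : f' = f₁') (h'' : f'' = f₁'') :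
    HasSecondFDerivAt f f₁' f₁'' x :=
  h' ▸ h'' ▸ hf

theorem sub (hf : HasSecondFDerivAt f f' f'' x) (hg : HasSecondFDerivAt g g' g'' x) :
    HasSecondFDerivAt (fun z => f z - g z) (f' - g') (f'' - g'') x := by
  obtain ⟨F, hF, rfl, hF'⟩ := hf
  obtain ⟨G, hG, rfl, hG'⟩ := hg
  exact ⟨fun z => F z - G z, hF.mp (hG.mono fun z hg hf => hf.sub hg), rfl, hF'.sub hG'⟩

theorem const_mul (c : 𝕜) (hf : HasSecondFDerivAt f f' f'' x) :
    HasSecondFDerivAt (fun z => c * f z) (c • f') (c • f'') x := by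
  obtain ⟨F, hF, rfl, hF'⟩ := hf
  exact ⟨fun z => c • F z, hF.mono fun z hf => hf.const_mul c, rfl, hF'.const_smul c⟩

theorem mul (hf : HasSecondFDerivAt f f' f'' x) (hg : HasSecondFDerivAt g g' g'' x) :
    HasSecondFDerivAt (fun z => f z * g z) (f x • g' + g x • f')
      (f x • g'' + f'.smulRight g' + (g x • f'' + g'.smulRight f')) x := by
  obtain ⟨F, hF, rfl, hF'⟩ := hf
  obtain ⟨G, hG, rfl, hG'⟩ := hg
  exact ⟨fun z => f z • G z + g z • F z, hF.mp (hG.mono fun z hg hf => hf.mul hg), rfl,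
    (hF.self_of_nhds.smul hG').add (hG.self_of_nhds.smul hF')⟩

theorem scalar_comp {φ φ' : 𝕜 → 𝕜} {φ'' : 𝕜} (hφ : ∀ᶠ t in 𝓝 (f x), HasDerivAt φ (φ' t) t)
    (hφ' : HasDerivAt φ' φ'' (f x)) (hf : HasSecondFDerivAt f f' f'' x) :
    HasSecondFDerivAt (fun z => φ (f z)) (φ' (f x) • f')
      (φ' (f x) • f'' + (φ'' • f').smulRight f') x := by
  obtain ⟨F, hF, rfl, hF'⟩ := hf
  have hfx : HasFDerivAt f (F x) x := hF.self_of_nhds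
  exact ⟨fun z => φ' (f z) • F z,
    hF.mp ((hfx.continuousAt.eventually hφ).mono fun z hφ hf => hφ.comp_hasFDerivAt z hf), rfl,
    (hφ'.comp_hasFDerivAt x hfx).smul hF'⟩

theorem comp_of_fderiv_eq_zero {u : F → E} {u' : F →L[𝕜] E} {y : F}
    (hf : HasSecondFDerivAt f 0 f'' (u y)) (hu : ContDiffAt 𝕜 2 u y) (hu' : HasFDerivAt u u' y) :
    HasSecondFDerivAt (f ∘ u) 0 (f''.bilinearComp u' u') y := by
  obtain ⟨G, hG, hG0, hG'⟩ := hf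
  have hdiff : ∀ᶠ z in 𝓝 y, HasFDerivAt u (fderiv 𝕜 u z) z :=
    (hu.eventually (by decide)).mono fun z hz => (hz.differentiableAt two_ne_zero).hasFDerivAt
  have hderiv : HasFDerivAt (fderiv 𝕜 u) (fderiv 𝕜 (fderiv 𝕜 u) y) y :=
    ((hu.fderiv_right (m := 1) (by norm_num)).differentiableAt one_ne_zero).hasFDerivAt
  refine ⟨fun z => (G (u z)).comp (fderiv 𝕜 u z), ?_, ?_, ?_⟩
  · exact hdiff.mp ((hu'.continuousAt.eventually hG).mono fun z hf hu => hf.comp z hu)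
  · simp only [hG0, zero_comp]
  · refine ((hG'.comp y hu').clm_comp hderiv).congr_fderiv ?_
    ext v w
    simp [hG0, hu'.fderiv]

end HasSecondFDerivAt

end SecondFDeriv

section Partial

variable {𝕜 F : Type*} [NontriviallyNormedField 𝕜] [NormedAddCommGroup F] [NormedSpace 𝕜 F]

theorem hasDerivAt_partial_fst {f : 𝕜 × 𝕜 → F} {f' : 𝕜 × 𝕜 →L[𝕜] F} {z : 𝕜 × 𝕜}
    (hf : HasFDerivAt f f' z) : HasDerivAt (fun t => f (t, z.2)) (f' (1, 0)) z.1 :=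
  hf.comp_hasDerivAt z.1 ((hasDerivAt_id z.1).prodMk (hasDerivAt_const z.1 z.2))

theorem hasDerivAt_partial_snd {f : 𝕜 × 𝕜 → F} {f' : 𝕜 × 𝕜 →L[𝕜] F} {z : 𝕜 × 𝕜}
    (hf : HasFDerivAt f f' z) : HasDerivAt (fun t => f (z.1, t)) (f' (0, 1)) z.2 :=
  hf.comp_hasDerivAt z.2 ((hasDerivAt_const z.2 z.1).prodMk (hasDerivAt_id z.2))

namespace HasSecondFDerivAt

variable {f : 𝕜 × 𝕜 → 𝕜} {f' : 𝕜 × 𝕜 →L[𝕜] 𝕜} {f'' : 𝕜 × 𝕜 →L[𝕜] 𝕜 × 𝕜 →L[𝕜] 𝕜} {z : 𝕜 × 𝕜}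

theorem hasFDerivAt_deriv_fst (hf : HasSecondFDerivAt f f' f'' z) :
    HasFDerivAt (fun w : 𝕜 × 𝕜 => deriv (fun t => f (t, w.2)) w.1) (f''.flip (1, 0)) z := by
  obtain ⟨G, hG, -, hG'⟩ := hf
  have happly := hG'.clm_apply (hasFDerivAt_const ((1, 0) : 𝕜 × 𝕜) z)
  rw [comp_zero, zero_add] at happly
  exact happly.congr_of_eventuallyEq (hG.mono fun w hw => (hasDerivAt_partial_fst hw).deriv)

theorem hasFDerivAt_deriv_snd (hf : HasSecondFDerivAt f f' f'' z) :
    HasFDerivAt (fun w : 𝕜 × 𝕜 => deriv (fun t => f (w.1, t)) w.2) (f''.flip (0, 1)) z := by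
  obtain ⟨G, hG, -, hG'⟩ := hf
  have happly := hG'.clm_apply (hasFDerivAt_const ((0, 1) : 𝕜 × 𝕜) z)
  rw [comp_zero, zero_add] at happly
  exact happly.congr_of_eventuallyEq (hG.mono fun w hw => (hasDerivAt_partial_snd hw).deriv)

end HasSecondFDerivAt

/-- The symmetric bilinear form on `𝕜 × 𝕜` with matrix `[[a, b], [b, d]]`, used to write Hessians
in two variables. -/
noncomputable def symmBilin (a b d : 𝕜) : 𝕜 × 𝕜 →L[𝕜] 𝕜 × 𝕜 →L[𝕜] 𝕜 :=
  (fst 𝕜 𝕜 𝕜).smulRight (a • fst 𝕜 𝕜 𝕜 + b • snd 𝕜 𝕜 𝕜) +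
    (snd 𝕜 𝕜 𝕜).smulRight (b • fst 𝕜 𝕜 𝕜 + d • snd 𝕜 𝕜 𝕜)

theorem symmBilin_apply (a b d : 𝕜) (v w : 𝕜 × 𝕜) :
    symmBilin a b d v w = v.1 * (a * w.1 + b * w.2) + v.2 * (b * w.1 + d * w.2) :=
  rfl

end Partial

section ContrastProfile

theorem hasDerivAt_pow_div_sqrt_sq_add_pow {w : ℝ} (hw : 0 < w) (m n : ℕ) (r : ℝ) :
    HasDerivAt (fun r => r ^ m / √(r ^ 2 + w) ^ n)
      (m * r ^ (m - 1) / √(r ^ 2 + w) ^ n - n * r ^ (m + 1) / √(r ^ 2 + w) ^ (n + 2)) r := by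
  have hsqrt : HasDerivAt (fun r => √(r ^ 2 + w)) (r / √(r ^ 2 + w)) r := by
    refine (((hasDerivAt_pow 2 r).add_const w).sqrt (by positivity)).congr_deriv ?_
    simp only [Nat.cast_ofNat, Nat.add_one_sub_one, pow_one]
    field_simp
  refine ((hasDerivAt_pow m r).div (hsqrt.fun_pow n) (by positivity)).congr_deriv ?_
  cases n with
  | zero => simp
  | succ n =>
    rw [Nat.add_sub_cancel]
    field_simp
    ring

theorem sqrt_sq_add_sq_self_pow {r : ℝ} (hr : 0 ≤ r) (n : ℕ) :
    √(r ^ 2 + r ^ 2) ^ (2 * n + 1) = 2 ^ n * √2 * r ^ (2 * n + 1) := by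
  rw [← two_mul, Real.sqrt_mul zero_le_two, Real.sqrt_sq hr, mul_pow, pow_succ (√2), pow_mul,
    Real.sq_sqrt zero_le_two]

-- The derivative keeps the shape `r ^ m / √(r ^ 2 + w) ^ n` so it can be differentiated again.
theorem hasDerivAt_sq_div_sqrt_pow_three {w : ℝ} (hw : 0 < w) (r : ℝ) :
    HasDerivAt (fun r => r ^ 2 / √(r ^ 2 + w) ^ 3)
      (2 * (r ^ 1 / √(r ^ 2 + w) ^ 3) - 3 * (r ^ 3 / √(r ^ 2 + w) ^ 5)) r :=
  (hasDerivAt_pow_div_sqrt_sq_add_pow hw 2 3 r).congr_deriv (by norm_num [mul_div_assoc])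

theorem deriv_sq_div_sqrt_pow_three_self {r : ℝ} (hr : 0 < r) :
    deriv (fun t => t ^ 2 / √(t ^ 2 + r ^ 2) ^ 3) r = 1 / (4 * √2 * r ^ 2) := by
  rw [(hasDerivAt_sq_div_sqrt_pow_three (pow_pos hr 2) r).deriv,
    sqrt_sq_add_sq_self_pow hr.le 1, sqrt_sq_add_sq_self_pow hr.le 2]
  field_simp
  ring

theorem hasDerivAt_deriv_sq_div_sqrt_pow_three_self {r : ℝ} (hr : 0 < r) :
    HasDerivAt (deriv fun t => t ^ 2 / √(t ^ 2 + r ^ 2) ^ 3) (-7 / (8 * √2 * r ^ 3)) r := by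
  have hr2 : 0 < r ^ 2 := pow_pos hr 2
  have hpow := hasDerivAt_pow_div_sqrt_sq_add_pow hr2
  rw [funext fun t => (hasDerivAt_sq_div_sqrt_pow_three hr2 t).deriv]
  refine (((hpow 1 3 r).const_mul 2).fun_sub ((hpow 3 5 r).const_mul 3)).congr_deriv ?_
  rw [sqrt_sq_add_sq_self_pow hr.le 1, sqrt_sq_add_sq_self_pow hr.le 2,
    sqrt_sq_add_sq_self_pow hr.le 3]
  push_cast
  field_simp
  ring

theorem HasSecondFDerivAt.sq_div_sqrt_pow_three {E : Type*} [NormedAddCommGroup E]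
    [NormedSpace ℝ E] {f : E → ℝ} {f' : E →L[ℝ] ℝ} {f'' : E →L[ℝ] E →L[ℝ] ℝ} {x : E}
    (hf : HasSecondFDerivAt f f' f'' x) (hx : 0 < f x) :
    HasSecondFDerivAt (fun z => f z ^ 2 / √(f z ^ 2 + f x ^ 2) ^ 3)
      ((1 / (4 * √2 * f x ^ 2)) • f')
      ((1 / (4 * √2 * f x ^ 2)) • f'' + ((-7 / (8 * √2 * f x ^ 3)) • f').smulRight f') x := by
  have hderiv (t : ℝ) := hasDerivAt_sq_div_sqrt_pow_three (pow_pos hx 2) t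
  rw [← deriv_sq_div_sqrt_pow_three_self hx]
  exact hf.scalar_comp (.of_forall fun t => (hderiv t).differentiableAt.hasDerivAt)
    (hasDerivAt_deriv_sq_div_sqrt_pow_three_self hx)

/-- The limit contrast as a function of `z = (φ, γ)`, where `(φ₀, γ₀)` is the true parameter. -/
noncomputable def contrastProfile (φ₀ γ₀ : ℝ) (z : ℝ × ℝ) : ℝ :=
  1 / (4 * √π) *
    (z.1 * (z.1 * z.2 - 4 * √2 * φ₀ * γ₀ ^ 2 * (z.2 ^ 2 / √(z.2 ^ 2 + γ₀ ^ 2) ^ 3)))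

theorem hasSecondFDerivAt_contrastProfile (φ₀ : ℝ) {γ₀ : ℝ} (hγ₀ : 0 < γ₀) :
    HasSecondFDerivAt (contrastProfile φ₀ γ₀) 0
      ((1 / (4 * √π)) • symmBilin (2 * γ₀) φ₀ (7 * φ₀ ^ 2 / (2 * γ₀))) (φ₀, γ₀) := by
  have hfst := HasSecondFDerivAt.of_clm (fst ℝ ℝ ℝ) (φ₀, γ₀)
  have hsnd := HasSecondFDerivAt.of_clm (snd ℝ ℝ ℝ) (φ₀, γ₀)
  have hcross : HasSecondFDerivAt
      (fun z : ℝ × ℝ => 4 * √2 * φ₀ * γ₀ ^ 2 * (z.2 ^ 2 / √(z.2 ^ 2 + γ₀ ^ 2) ^ 3))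
      (φ₀ • snd ℝ ℝ ℝ) (symmBilin 0 0 (-7 * φ₀ / (2 * γ₀))) (φ₀, γ₀) := by
    refine ((hsnd.sq_div_sqrt_pow_three hγ₀).const_mul _).congr_fderiv ?_ ?_
    · rw [smul_smul]
      congr 1
      simp only [coe_snd']
      field_simp
    · refine ContinuousLinearMap.ext fun v => ContinuousLinearMap.ext fun w => ?_
      simp only [smul_apply, add_apply, smulRight_apply, zero_apply, symmBilin_apply, coe_snd',
        smul_eq_mul]
      field_simp
      ring
  have hcross_value : 4 * √2 * φ₀ * γ₀ ^ 2 * (γ₀ ^ 2 / √(γ₀ ^ 2 + γ₀ ^ 2) ^ 3) = 2 * φ₀ * γ₀ := by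
    rw [sqrt_sq_add_sq_self_pow hγ₀.le 1]
    field_simp
    ring
  refine ((hfst.mul ((hfst.mul hsnd).sub hcross)).const_mul (1 / (4 * √π))).congr_fderiv ?_ ?_
  · simp only [coe_fst', coe_snd', hcross_value]
    refine ContinuousLinearMap.ext fun v => ?_
    simp only [smul_apply, add_apply, sub_apply, zero_apply, coe_fst', coe_snd', smul_eq_mul]
    ring
  · simp only [coe_fst', coe_snd', hcross_value]
    refine ContinuousLinearMap.ext fun v => ContinuousLinearMap.ext fun w => ?_
    simp only [smul_apply, add_apply, sub_apply, smulRight_apply, zero_apply, symmBilin_apply,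
      coe_fst', coe_snd', smul_eq_mul]
    field_simp
    ring

end ContrastProfile

section StationaryStdDev

/-- The stationary standard deviation `γ = √(s / (1 - φ²))` of the AR(1) model with parameter
`θ = (φ, s)`. -/
noncomputable def stationaryStdDev (θ : ℝ × ℝ) : ℝ := √(θ.2 / (1 - θ.1 ^ 2))

theorem contDiffAt_stationaryStdDev {θ : ℝ × ℝ} (hv : θ.2 / (1 - θ.1 ^ 2) ≠ 0) {n : WithTop ℕ∞} :
    ContDiffAt ℝ n stationaryStdDev θ :=
  (contDiffAt_snd.div (contDiffAt_const.sub (contDiffAt_fst.pow 2))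
    (div_ne_zero_iff.1 hv).2).sqrt hv

theorem hasFDerivAt_stationaryStdDev {θ : ℝ × ℝ} (hv : 0 < θ.2 / (1 - θ.1 ^ 2)) :
    HasFDerivAt stationaryStdDev
      ((θ.1 * stationaryStdDev θ / (1 - θ.1 ^ 2)) • fst ℝ ℝ ℝ +
        (1 / (2 * stationaryStdDev θ * (1 - θ.1 ^ 2))) • snd ℝ ℝ ℝ) θ := by
  have hD : 1 - θ.1 ^ 2 ≠ 0 := (div_ne_zero_iff.1 hv.ne').2
  have hγ : 0 < stationaryStdDev θ := Real.sqrt_pos.2 hv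
  have hs : θ.2 = stationaryStdDev θ ^ 2 * (1 - θ.1 ^ 2) := by
    rw [stationaryStdDev, Real.sq_sqrt hv.le, div_mul_cancel₀ _ hD]
  have hdenom : HasFDerivAt (fun θ : ℝ × ℝ => 1 - θ.1 ^ 2) (-((2 * θ.1) • fst ℝ ℝ ℝ)) θ :=
    ((hasFDerivAt_fst.pow 2).const_sub 1).congr_fderiv (by simp)
  have hquot := hasFDerivAt_snd.fun_mul ((hasDerivAt_inv hD).comp_hasFDerivAt θ hdenom)
  refine (hquot.sqrt hv.ne').congr_fderiv ?_
  change (1 / (2 * stationaryStdDev θ)) • _ = _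
  rw [hs]
  refine ContinuousLinearMap.ext fun v => ?_
  simp only [Function.comp_apply, smul_apply, add_apply, neg_apply, coe_fst', coe_snd', smul_eq_mul]
  field_simp

theorem limitContrast_eq_contrastProfile {φ₀ σ₀2 : ℝ} (h : 0 ≤ σ₀2 / (1 - φ₀ ^ 2)) (θ : ℝ × ℝ) :
    limitContrast φ₀ σ₀2 θ.1 θ.2 =
      contrastProfile φ₀ (stationaryStdDev (φ₀, σ₀2)) (θ.1, stationaryStdDev θ) := by
  have hγ₀ : σ₀2 / (1 - φ₀ ^ 2) = stationaryStdDev (φ₀, σ₀2) ^ 2 := (Real.sq_sqrt h).symm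
  rw [limitContrast, ← stationaryStdDev, hγ₀, Real.rpow_div_two_eq_sqrt _ (by positivity),
    Real.rpow_ofNat, Real.sqrt_div zero_le_two, contrastProfile]
  ring

end StationaryStdDev

theorem hasSecondFDerivAt_limitContrast {φ₀ σ₀2 γ₀ : ℝ} (hv : 0 < σ₀2 / (1 - φ₀ ^ 2))
    (hγ₀ : γ₀ = √(σ₀2 / (1 - φ₀ ^ 2))) :
    HasSecondFDerivAt (fun θ => limitContrast φ₀ σ₀2 θ.1 θ.2) 0
      ((1 / (8 * √π * (1 - φ₀ ^ 2) ^ 2)) • symmBilin (γ₀ * (7 * φ₀ ^ 4 - 4 * φ₀ ^ 2 + 4))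
        ((-5 * φ₀ ^ 5 + 3 * φ₀ ^ 3 + 2 * φ₀) / (2 * γ₀ * (1 - φ₀ ^ 2)))
        (7 * φ₀ ^ 2 / (4 * γ₀ ^ 3))) (φ₀, σ₀2) := by
  change γ₀ = stationaryStdDev (φ₀, σ₀2) at hγ₀
  subst hγ₀
  have hD : 1 - φ₀ ^ 2 ≠ 0 := (div_ne_zero_iff.1 hv.ne').2
  have hγ₀ : 0 < stationaryStdDev (φ₀, σ₀2) := Real.sqrt_pos.2 hv
  have hcoord := hasFDerivAt_fst.prodMk (hasFDerivAt_stationaryStdDev (θ := (φ₀, σ₀2)) hv)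
  have hpullback := HasSecondFDerivAt.comp_of_fderiv_eq_zero
    (u := fun θ : ℝ × ℝ => (θ.1, stationaryStdDev θ)) (y := (φ₀, σ₀2))
    (hasSecondFDerivAt_contrastProfile φ₀ hγ₀)
    (contDiffAt_fst.prodMk (contDiffAt_stationaryStdDev hv.ne')) hcoord
  rw [funext (limitContrast_eq_contrastProfile hv.le)]
  refine hpullback.congr_fderiv rfl ?_
  refine ContinuousLinearMap.ext fun v => ContinuousLinearMap.ext fun w => ?_
  simp only [bilinearComp_apply, ContinuousLinearMap.prod_apply, smul_apply, add_apply,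
    symmBilin_apply, coe_fst', coe_snd', smul_eq_mul]
  field_simp
  ring

/-- The Hessian matrix of the limit contrast function at `(φ₀, σ₀²)` equals
`(1/(8√π (1 − φ₀²)²)) [[γ₀(7φ₀⁴ − 4φ₀² + 4), (−5φ₀⁵ + 3φ₀³ + 2φ₀)/(2γ₀(1 − φ₀²))],
[(−5φ₀⁵ + 3φ₀³ + 2φ₀)/(2γ₀(1 − φ₀²)), 7φ₀²/(4γ₀³)]]`, where `γ₀ = √(σ₀²/(1 − φ₀²))`. -/
theorem stmt7 (φ₀ σ₀2 : ℝ) (hφ : -1 < φ₀ ∧ φ₀ < 1) (hσ : 0 < σ₀2)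
    (γ₀ : ℝ) (hγ₀ : γ₀ = Real.sqrt (σ₀2 / (1 - φ₀ ^ 2))) :
    (deriv (fun p : ℝ => deriv (fun q : ℝ => limitContrast φ₀ σ₀2 q σ₀2) p) φ₀
        = (1 / (8 * Real.sqrt Real.pi * (1 - φ₀ ^ 2) ^ 2))
          * (γ₀ * (7 * φ₀ ^ 4 - 4 * φ₀ ^ 2 + 4)))
    ∧ (deriv (fun p : ℝ => deriv (fun s : ℝ => limitContrast φ₀ σ₀2 p s) σ₀2) φ₀
        = (1 / (8 * Real.sqrt Real.pi * (1 - φ₀ ^ 2) ^ 2))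
          * ((-5 * φ₀ ^ 5 + 3 * φ₀ ^ 3 + 2 * φ₀) / (2 * γ₀ * (1 - φ₀ ^ 2))))
    ∧ (deriv (fun s : ℝ => deriv (fun p : ℝ => limitContrast φ₀ σ₀2 p s) φ₀) σ₀2
        = (1 / (8 * Real.sqrt Real.pi * (1 - φ₀ ^ 2) ^ 2))
          * ((-5 * φ₀ ^ 5 + 3 * φ₀ ^ 3 + 2 * φ₀) / (2 * γ₀ * (1 - φ₀ ^ 2))))
    ∧ (deriv (fun s : ℝ => deriv (fun t : ℝ => limitContrast φ₀ σ₀2 φ₀ t) s) σ₀2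
        = (1 / (8 * Real.sqrt Real.pi * (1 - φ₀ ^ 2) ^ 2))
          * (7 * φ₀ ^ 2 / (4 * γ₀ ^ 3))) := by
  have hv : 0 < σ₀2 / (1 - φ₀ ^ 2) := div_pos hσ (by nlinarith [hφ.1, hφ.2])
  have hess := hasSecondFDerivAt_limitContrast hv hγ₀
  have hess_fst := hess.hasFDerivAt_deriv_fst
  have hess_snd := hess.hasFDerivAt_deriv_snd
  refine ⟨(hasDerivAt_partial_fst hess_fst).deriv.trans ?_,
    (hasDerivAt_partial_fst hess_snd).deriv.trans ?_,
    (hasDerivAt_partial_snd hess_fst).deriv.trans ?_,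
    (hasDerivAt_partial_snd hess_snd).deriv.trans ?_⟩ <;>
  simp [symmBilin_apply]
end

section
/- Let γ > 0 and ρ ∈ (−1, 1), and let (X₁, X₂) be a centered bivariate Gaussian vector with Var(X₁) = Var(X₂) = γ² and Cov(X₁, X₂) = ρ γ². Define V = γ²(1 − ρ²)(2 − ρ²)/((2 − ρ²)² − ρ²) and 𝓥 = γ²(1 − ρ²)/(2 − ρ²). Then E[X₁² X₂² exp(−(X₁² + X₂²)/(2γ²))] = (1/γ)(2 − ρ²)^{−1/2} V^{3/2} (𝓥 + 3ρ² V/(2 − ρ²)²). -/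
open MeasureTheory Real

/-- The density of a centered bivariate Gaussian vector with `Var(X₁) = Var(X₂) = γ²`
and correlation `ρ`, i.e. covariance matrix `γ²[[1, ρ],[ρ, 1]]`. -/
noncomputable def bivGaussDens (γ ρ x₁ x₂ : ℝ) : ℝ :=
  (2 * Real.pi * γ ^ 2 * Real.sqrt (1 - ρ ^ 2))⁻¹ *
    Real.exp (-(x₁ ^ 2 - 2 * ρ * x₁ * x₂ + x₂ ^ 2) / (2 * γ ^ 2 * (1 - ρ ^ 2)))

/-!
Multiplying the density of `(X₁, X₂)` by `exp (-(x₁² + x₂²) / (2γ²))` adds two quadratic forms in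
the exponent. Completing the square in `x₂` shows that the product is a constant times a Gaussian
density under which `X₁ ∼ N(0, V)` and, given `X₁`, `X₂ ∼ N(k X₁, 𝓥)` with `k = ρ / (2 - ρ²)`.
Conditioning on `X₁`, the mixed moment is `E[X₁² (𝓥 + k² X₁²)] = V 𝓥 + 3 k² V²`, where the
Gaussian moments come from Stein's identity `E[(X - m) f(X)] = v E[f'(X)]`.
-/

open ProbabilityTheory
open scoped NNReal

section Moments

variable {m : ℝ} {v : ℝ≥0}

lemma integrable_gaussianReal_iff {E : Type*} [NormedAddCommGroup E] [NormedSpace ℝ E]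
    (hv : v ≠ 0) {f : ℝ → E} :
    Integrable f (gaussianReal m v) ↔ Integrable fun x ↦ gaussianPDFReal m v x • f x := by
  rw [gaussianReal_of_var_ne_zero m hv,
    integrable_withDensity_iff_integrable_smul' (measurable_gaussianPDF m v)
      (.of_forall fun _ ↦ gaussianPDF_lt_top)]
  simp only [toReal_gaussianPDF]

lemma integrable_pow_gaussianReal (n : ℕ) : Integrable (fun x ↦ x ^ n) (gaussianReal m v) :=
  integrable_pow_of_mem_interior_integrableExpSet (X := id) (by simp) n

lemma hasDerivAt_gaussianPDFReal (m : ℝ) (v : ℝ≥0) (x : ℝ) :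
    HasDerivAt (gaussianPDFReal m v) (-((x - m) / v) * gaussianPDFReal m v x) x := by
  have h := ((((hasDerivAt_id' x).sub_const m).fun_pow 2).fun_neg.div_const (2 * v : ℝ)).exp
    |>.const_mul (√(2 * π * v))⁻¹
  refine h.congr_deriv ?_
  simp only [gaussianPDFReal]
  field_simp
  ring

theorem integral_sub_mul_gaussianReal {f f' : ℝ → ℝ} (hf : ∀ x, HasDerivAt f (f' x) x)
    (hfi : Integrable f (gaussianReal m v)) (hf'i : Integrable f' (gaussianReal m v))
    (hxf : Integrable (fun x ↦ (x - m) * f x) (gaussianReal m v)) :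
    ∫ x, (x - m) * f x ∂gaussianReal m v = v * ∫ x, f' x ∂gaussianReal m v := by
  rcases eq_or_ne v 0 with rfl | hv
  · simp
  rw [integrable_gaussianReal_iff hv] at hfi hf'i hxf
  have hderiv (x : ℝ) : -((x - m) / v) * gaussianPDFReal m v x * f x
      = -(v : ℝ)⁻¹ * (gaussianPDFReal m v x • ((x - m) * f x)) := by
    simp only [smul_eq_mul]; ring
  have hparts : ∫ x, gaussianPDFReal m v x * f' x
      = -∫ x, -((x - m) / v) * gaussianPDFReal m v x * f x :=
    integral_mul_deriv_eq_deriv_mul_of_integrable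
      (fun x _ ↦ hasDerivAt_gaussianPDFReal m v x) (fun x _ ↦ hf x) hf'i
      ((hxf.const_mul (-(v : ℝ)⁻¹)).congr (.of_forall fun x ↦ (hderiv x).symm)) hfi
  simp only [integral_gaussianReal_eq_integral_smul hv, smul_eq_mul] at hderiv ⊢
  rw [hparts]
  simp only [hderiv, integral_const_mul]
  field_simp

theorem integral_pow_add_two_gaussianReal (n : ℕ) :
    ∫ x, x ^ (n + 2) ∂gaussianReal m v
      = m * ∫ x, x ^ (n + 1) ∂gaussianReal m v + (n + 1) * v * ∫ x, x ^ n ∂gaussianReal m v := by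
  have hi (k : ℕ) := integrable_pow_gaussianReal (m := m) (v := v) k
  have hsub (x : ℝ) : (x - m) * x ^ (n + 1) = x ^ (n + 2) - m * x ^ (n + 1) := by ring
  have hderiv (x : ℝ) : HasDerivAt (fun x ↦ x ^ (n + 1)) ((n + 1) * x ^ n) x := by
    simpa using hasDerivAt_pow (n + 1) x
  have hstein := integral_sub_mul_gaussianReal (m := m) (v := v) hderiv (hi _)
    ((hi n).const_mul _) (by simp only [hsub]; exact (hi _).sub ((hi _).const_mul m))
  simp only [hsub] at hstein
  rw [integral_sub (hi _) ((hi _).const_mul m), integral_const_mul, integral_const_mul] at hstein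
  linear_combination hstein

lemma integral_sq_gaussianReal : ∫ x, x ^ 2 ∂gaussianReal m v = m ^ 2 + v := by
  have h := integral_pow_add_two_gaussianReal (m := m) (v := v) 0
  simp only [zero_add, pow_one, integral_id_gaussianReal, pow_zero, integral_const, probReal_univ,
    smul_eq_mul] at h
  linear_combination h

lemma integral_pow_four_gaussianReal :
    ∫ x, x ^ 4 ∂gaussianReal m v = m ^ 4 + 6 * m ^ 2 * v + 3 * v ^ 2 := by
  have h₃ := integral_pow_add_two_gaussianReal (m := m) (v := v) 1
  have h₄ := integral_pow_add_two_gaussianReal (m := m) (v := v) 2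
  simp only [Nat.reduceAdd, pow_one, integral_id_gaussianReal, integral_sq_gaussianReal] at h₃ h₄
  rw [h₄, h₃]
  push_cast
  ring

end Moments

section Disintegration

variable {m : ℝ} {v w : ℝ≥0}

theorem integral_gaussianPDFReal_mul_gaussianPDFReal_smul {E : Type*} [NormedAddCommGroup E]
    [NormedSpace ℝ E] {g : ℝ → ℝ} (hv : v ≠ 0) (hw : w ≠ 0) (hg : Measurable g) {f : ℝ × ℝ → E}
    (hf : AEStronglyMeasurable f)
    (hfi : ∀ᵐ x, Integrable (fun y ↦ f (x, y)) (gaussianReal (g x) w))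
    (hfn : Integrable (fun x ↦ ∫ y, ‖f (x, y)‖ ∂gaussianReal (g x) w) (gaussianReal m v)) :
    ∫ p : ℝ × ℝ, (gaussianPDFReal m v p.1 * gaussianPDFReal (g p.1) w p.2) • f p
      = ∫ x, ∫ y, f (x, y) ∂gaussianReal (g x) w ∂gaussianReal m v := by
  have hmeas : Measurable fun p : ℝ × ℝ ↦
      gaussianPDFReal m v p.1 * gaussianPDFReal (g p.1) w p.2 := by
    simp only [gaussianPDFReal]
    fun_prop
  have hint : Integrable fun p : ℝ × ℝ ↦
      (gaussianPDFReal m v p.1 * gaussianPDFReal (g p.1) w p.2) • f p := by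
    have hmeas : AEStronglyMeasurable (fun p : ℝ × ℝ ↦
        (gaussianPDFReal m v p.1 * gaussianPDFReal (g p.1) w p.2) • f p) :=
      hmeas.aestronglyMeasurable.smul hf
    refine (integrable_prod_iff hmeas).2 ⟨?_, ?_⟩
    · filter_upwards [hfi] with x hx
      simp only [mul_smul]
      exact ((integrable_gaussianReal_iff hw).1 hx).smul (gaussianPDFReal m v x)
    · simpa only [mul_smul, norm_smul, Real.norm_of_nonneg (gaussianPDFReal_nonneg _ _ _),
        integral_const_mul, integral_gaussianReal_eq_integral_smul hw, smul_eq_mul]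
        using (integrable_gaussianReal_iff hv).1 hfn
  rw [Measure.volume_eq_prod, integral_prod _ hint]
  simp only [mul_smul, integral_smul, integral_gaussianReal_eq_integral_smul hv,
    integral_gaussianReal_eq_integral_smul hw]

theorem integral_sq_mul_sq_mul_gaussianPDFReal (hv : v ≠ 0) (hw : w ≠ 0) (k : ℝ) :
    ∫ p : ℝ × ℝ, p.1 ^ 2 * p.2 ^ 2 * (gaussianPDFReal 0 v p.1 * gaussianPDFReal (k * p.1) w p.2)
      = v * (w + 3 * k ^ 2 * v) := by
  have hcond (x : ℝ) : ∫ y, x ^ 2 * y ^ 2 ∂gaussianReal (k * x) w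
      = k ^ 2 * x ^ 4 + w * x ^ 2 := by
    rw [integral_const_mul, integral_sq_gaussianReal]
    ring
  have hi₂ := (integrable_pow_gaussianReal (m := 0) (v := v) 2).const_mul w
  have hi₄ := (integrable_pow_gaussianReal (m := 0) (v := v) 4).const_mul (k ^ 2)
  have hdis := integral_gaussianPDFReal_mul_gaussianPDFReal_smul (m := 0) hv hw
    (f := fun p ↦ p.1 ^ 2 * p.2 ^ 2) (measurable_const_mul k) (by fun_prop)
    (.of_forall fun x ↦ (integrable_pow_gaussianReal 2).const_mul (x ^ 2))
    (by simpa only [norm_mul, norm_pow, Real.norm_eq_abs, sq_abs, hcond] using hi₄.fun_add hi₂)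
  simp only [smul_eq_mul, mul_comm (gaussianPDFReal _ _ _ * _), hcond] at hdis
  rw [hdis, integral_add hi₄ hi₂, integral_const_mul, integral_const_mul,
    integral_sq_gaussianReal, integral_pow_four_gaussianReal]
  ring

end Disintegration


section Tilting

variable {γ ρ : ℝ}

/-- The paper's `V`: the variance of `X₁` under the Gaussian law obtained by multiplying
`bivGaussDens γ ρ` by `exp (-(x₁² + x₂²) / (2γ²))` and normalizing. -/
noncomputable def tiltedVar (γ ρ : ℝ) : ℝ :=
  γ ^ 2 * (1 - ρ ^ 2) * (2 - ρ ^ 2) / ((2 - ρ ^ 2) ^ 2 - ρ ^ 2)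

/-- The paper's `𝓥`: the conditional variance of `X₂` given `X₁` under the Gaussian law obtained by
multiplying `bivGaussDens γ ρ` by `exp (-(x₁² + x₂²) / (2γ²))` and normalizing. -/
noncomputable def tiltedCondVar (γ ρ : ℝ) : ℝ :=
  γ ^ 2 * (1 - ρ ^ 2) / (2 - ρ ^ 2)

lemma sq_lt_sq_two_sub_sq (hρ : ρ ^ 2 < 1) : ρ ^ 2 < (2 - ρ ^ 2) ^ 2 := by nlinarith

lemma tiltedVar_pos (hγ : γ ≠ 0) (hρ : ρ ^ 2 < 1) : 0 < tiltedVar γ ρ := by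
  have : 0 < 1 - ρ ^ 2 := by linarith
  have : 0 < 2 - ρ ^ 2 := by linarith
  have : 0 < (2 - ρ ^ 2) ^ 2 - ρ ^ 2 := sub_pos.2 (sq_lt_sq_two_sub_sq hρ)
  unfold tiltedVar
  positivity

lemma tiltedCondVar_pos (hγ : γ ≠ 0) (hρ : ρ ^ 2 < 1) : 0 < tiltedCondVar γ ρ := by
  have : 0 < 1 - ρ ^ 2 := by linarith
  have : 0 < 2 - ρ ^ 2 := by linarith
  unfold tiltedCondVar
  positivity

lemma tilted_quadForm_eq (hγ : γ ≠ 0) (hρ : ρ ^ 2 < 1) (x y : ℝ) :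
    (x ^ 2 + y ^ 2) / (2 * γ ^ 2)
        + (x ^ 2 - 2 * ρ * x * y + y ^ 2) / (2 * γ ^ 2 * (1 - ρ ^ 2))
      = x ^ 2 / (2 * tiltedVar γ ρ)
        + (y - ρ / (2 - ρ ^ 2) * x) ^ 2 / (2 * tiltedCondVar γ ρ) := by
  have : 1 - ρ ^ 2 ≠ 0 := by linarith
  have : 2 - ρ ^ 2 ≠ 0 := by linarith
  have : (2 - ρ ^ 2) ^ 2 - ρ ^ 2 ≠ 0 := (sub_pos.2 (sq_lt_sq_two_sub_sq hρ)).ne'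
  unfold tiltedVar tiltedCondVar
  field_simp
  ring

lemma sqrt_tiltedCondVar (hγ : 0 ≤ γ) (hρ : ρ ^ 2 ≤ 1) :
    √(tiltedCondVar γ ρ) = γ * √(1 - ρ ^ 2) / √(2 - ρ ^ 2) := by
  have : 0 ≤ 1 - ρ ^ 2 := by linarith
  rw [tiltedCondVar, Real.sqrt_div (by positivity), Real.sqrt_mul (sq_nonneg γ), Real.sqrt_sq hγ]

theorem exp_mul_bivGaussDens (hγ : 0 < γ) (hρ : ρ ^ 2 < 1) (x y : ℝ) :
    exp (-(x ^ 2 + y ^ 2) / (2 * γ ^ 2)) * bivGaussDens γ ρ x y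
      = 1 / γ * (√(2 - ρ ^ 2))⁻¹ * √(tiltedVar γ ρ)
        * (gaussianPDFReal 0 (tiltedVar γ ρ).toNNReal x
          * gaussianPDFReal (ρ / (2 - ρ ^ 2) * x) (tiltedCondVar γ ρ).toNNReal y) := by
  have h₁ : 0 < √(1 - ρ ^ 2) := Real.sqrt_pos.2 (by linarith)
  have h₂ : 0 < √(2 - ρ ^ 2) := Real.sqrt_pos.2 (by linarith)
  have hV := Real.sqrt_pos.2 (tiltedVar_pos hγ.ne' hρ)
  have hexp : exp (-(x ^ 2 + y ^ 2) / (2 * γ ^ 2))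
        * exp (-(x ^ 2 - 2 * ρ * x * y + y ^ 2) / (2 * γ ^ 2 * (1 - ρ ^ 2)))
      = exp (-(x - 0) ^ 2 / (2 * tiltedVar γ ρ))
        * exp (-(y - ρ / (2 - ρ ^ 2) * x) ^ 2 / (2 * tiltedCondVar γ ρ)) := by
    rw [← exp_add, ← exp_add]
    congr 1
    linear_combination -tilted_quadForm_eq hγ.ne' hρ x y
  have hconst : (2 * π * γ ^ 2 * √(1 - ρ ^ 2))⁻¹
      = 1 / γ * (√(2 - ρ ^ 2))⁻¹ * √(tiltedVar γ ρ)
        * ((√(2 * π * tiltedVar γ ρ))⁻¹ * (√(2 * π * tiltedCondVar γ ρ))⁻¹) := by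
    rw [Real.sqrt_mul (by positivity) (tiltedVar γ ρ),
      Real.sqrt_mul (by positivity) (tiltedCondVar γ ρ), sqrt_tiltedCondVar hγ.le hρ.le]
    field_simp
    rw [Real.sq_sqrt (by positivity)]
  rw [bivGaussDens, gaussianPDFReal, gaussianPDFReal,
    Real.coe_toNNReal _ (tiltedVar_pos hγ.ne' hρ).le,
    Real.coe_toNNReal _ (tiltedCondVar_pos hγ.ne' hρ).le, mul_left_comm, hexp, hconst]
  ring

theorem integral_sq_mul_sq_mul_exp_mul_bivGaussDens (hγ : 0 < γ) (hρ : ρ ^ 2 < 1) :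
    ∫ p : ℝ × ℝ, p.1 ^ 2 * p.2 ^ 2 * exp (-(p.1 ^ 2 + p.2 ^ 2) / (2 * γ ^ 2))
        * bivGaussDens γ ρ p.1 p.2
      = 1 / γ * (√(2 - ρ ^ 2))⁻¹ * √(tiltedVar γ ρ)
        * (tiltedVar γ ρ * (tiltedCondVar γ ρ + 3 * (ρ / (2 - ρ ^ 2)) ^ 2 * tiltedVar γ ρ)) := by
  have hV := tiltedVar_pos hγ.ne' hρ
  have h𝓥 := tiltedCondVar_pos hγ.ne' hρ
  have hmoment := integral_sq_mul_sq_mul_gaussianPDFReal (Real.toNNReal_pos.2 hV).ne'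
    (Real.toNNReal_pos.2 h𝓥).ne' (ρ / (2 - ρ ^ 2))
  rw [Real.coe_toNNReal _ hV.le, Real.coe_toNNReal _ h𝓥.le] at hmoment
  rw [← hmoment, ← integral_const_mul]
  congr! 2
  rw [mul_assoc, exp_mul_bivGaussDens hγ hρ, mul_left_comm]

end Tilting

/-- For a centered bivariate Gaussian `(X₁, X₂)` with common variance `γ²` and
correlation `ρ`, with `V = γ²(1−ρ²)(2−ρ²)/((2−ρ²)²−ρ²)` and `𝓥 = γ²(1−ρ²)/(2−ρ²)`:
`E[X₁² X₂² exp(−(X₁²+X₂²)/(2γ²))] = (1/γ)(2−ρ²)^{−1/2} V^{3/2}(𝓥 + 3ρ²V/(2−ρ²)²)`. -/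
theorem stmt12 (γ ρ : ℝ) (hγ : 0 < γ) (hρ : -1 < ρ ∧ ρ < 1)
    (V 𝓥 : ℝ)
    (hV : V = γ ^ 2 * (1 - ρ ^ 2) * (2 - ρ ^ 2) / ((2 - ρ ^ 2) ^ 2 - ρ ^ 2))
    (h𝓥 : 𝓥 = γ ^ 2 * (1 - ρ ^ 2) / (2 - ρ ^ 2)) :
    ∫ p : ℝ × ℝ, p.1 ^ 2 * p.2 ^ 2 * Real.exp (-(p.1 ^ 2 + p.2 ^ 2) / (2 * γ ^ 2))
        * bivGaussDens γ ρ p.1 p.2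
      = (1 / γ) * (2 - ρ ^ 2) ^ (-(1 : ℝ) / 2) * V ^ ((3 : ℝ) / 2)
          * (𝓥 + 3 * ρ ^ 2 * V / (2 - ρ ^ 2) ^ 2) := by
  have hρ_sq : ρ ^ 2 < 1 := (sq_lt_one_iff_abs_lt_one ρ).2 (abs_lt.2 hρ)
  obtain rfl : V = tiltedVar γ ρ := hV
  obtain rfl : 𝓥 = tiltedCondVar γ ρ := h𝓥
  have hrpow : (2 - ρ ^ 2) ^ (-(1 : ℝ) / 2) = (√(2 - ρ ^ 2))⁻¹ := by
    rw [neg_div, Real.rpow_neg (by linarith), Real.sqrt_eq_rpow]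
  have hVrpow : tiltedVar γ ρ ^ ((3 : ℝ) / 2) = √(tiltedVar γ ρ) * tiltedVar γ ρ := by
    rw [Real.sqrt_eq_rpow, ← Real.rpow_add_one (tiltedVar_pos hγ.ne' hρ_sq).ne']
    norm_num
  rw [integral_sq_mul_sq_mul_exp_mul_bivGaussDens hγ hρ_sq, hrpow, hVrpow, div_pow]
  ring
end

section
/- Let X be a standard Gaussian random variable. Then for every t ∈ ℝ, E[exp(i t log(X²))] = 2^{it} Γ(1/2 + it) / √π, where Γ denotes the complex Gamma function. -/
open MeasureTheory Real Complex

/-- The standard Gaussian density. -/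
noncomputable def stdGaussDens (x : ℝ) : ℝ :=
  (Real.sqrt (2 * Real.pi))⁻¹ * Real.exp (-x ^ 2 / 2)

/-!
Substituting `u = b x ^ p` in Euler's integral gives the Mellin transform of `exp (-(b x ^ p))`,
and by evenness the absolute moments `∫ |x| ^ z exp (-(b |x| ^ p))` over the line are twice a value
of that transform. Since `exp (i t log (x ^ 2)) = |x| ^ (2 i t)`, the expectation in question is the
absolute Gaussian moment of complex order `2 i t`. That moment exists for every complex order of
real part greater than `-1`, so the formula extends to complex `t` in the half-plane `Im t < 1 / 2`.
-/

section EvenIntegrals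

variable {E : Type*} [NormedAddCommGroup E]

theorem integrable_comp_abs_iff {f : ℝ → E} :
    Integrable (fun x => f |x|) ↔ IntegrableOn f (Set.Ioi 0) := by
  have hpos : IntegrableOn (fun x => f |x|) (Set.Ioi 0) ↔ IntegrableOn f (Set.Ioi 0) :=
    integrableOn_congr_fun (fun x hx => by rw [abs_of_pos hx]) measurableSet_Ioi
  have hneg : IntegrableOn (fun x => f |x|) (Set.Iic 0) ↔
      IntegrableOn (fun x => f |x|) (Set.Ioi 0) := by
    rw [← integrableOn_Ici_iff_integrableOn_Ioi]
    simpa only [Function.comp_def, abs_neg, Set.neg_preimage, Set.neg_Ici, neg_zero] using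
      (Measure.measurePreserving_neg volume).integrableOn_comp_preimage
        (MeasurableEquiv.neg ℝ).measurableEmbedding (f := fun x => f |x|) (s := Set.Ici 0)
  rw [← integrableOn_univ, ← Set.Iic_union_Ioi (a := (0 : ℝ)), integrableOn_union, hneg, hpos,
    and_self]

theorem integral_comp_abs_eq_two_smul [NormedSpace ℝ E] (f : ℝ → E) :
    ∫ x, f |x| = (2 : ℝ) • ∫ x in Set.Ioi 0, f x := by
  by_cases hf : Integrable fun x => f |x|
  · have hpos : ∫ x in Set.Ioi 0, f |x| = ∫ x in Set.Ioi 0, f x :=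
      setIntegral_congr_fun measurableSet_Ioi fun x hx => by rw [abs_of_pos hx]
    have hneg : ∫ x in Set.Iic 0, f |x| = ∫ x in Set.Ioi 0, f |x| := by
      simpa only [abs_neg, neg_zero] using integral_comp_neg_Iic 0 fun x => f |x|
    rw [← intervalIntegral.integral_Iic_add_Ioi hf.integrableOn hf.integrableOn, hneg, hpos,
      two_smul]
  · rw [integral_undef hf, integral_undef (mt integrable_comp_abs_iff.mpr hf), smul_zero]

end EvenIntegrals

section GammaIntegrals

variable {b p : ℝ}

theorem mellin_exp_neg_mul_rpow {s : ℂ} (hb : 0 < b) (hs : 0 < (s / p).re) :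
    mellin (fun x => (Real.exp (-(b * x ^ p)) : ℂ)) s =
      |p|⁻¹ * ((b : ℂ) ^ (-(s / p)) * Complex.Gamma (s / p)) := by
  rw [mellin_comp_rpow (fun u => (Real.exp (-(b * u)) : ℂ)),
    mellin_comp_mul_left (fun u => (Real.exp (-u) : ℂ)) _ hb, ← GammaIntegral_eq_mellin,
    ← Complex.Gamma_eq_integral hs, smul_eq_mul, real_smul, ofReal_inv]

theorem integral_abs_cpow_mul_exp_neg_mul_abs_rpow {z : ℂ} (hb : 0 < b)
    (hz : 0 < ((z + 1) / p).re) :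
    ∫ x : ℝ, ((|x| : ℝ) : ℂ) ^ z * (Real.exp (-(b * |x| ^ p)) : ℂ) =
      2 * (|p|⁻¹ * ((b : ℂ) ^ (-((z + 1) / p)) * Complex.Gamma ((z + 1) / p))) := by
  rw [integral_comp_abs_eq_two_smul fun x : ℝ => (x : ℂ) ^ z * (Real.exp (-(b * x ^ p)) : ℂ),
    ← mellin_exp_neg_mul_rpow hb hz, mellin, real_smul, ofReal_ofNat]
  simp only [add_sub_cancel_right, smul_eq_mul]

end GammaIntegrals

theorem ofReal_stdGaussDens (x : ℝ) :
    (stdGaussDens x : ℂ) = (√(2 * Real.pi) : ℂ)⁻¹ * Real.exp (-(1 / 2 * |x| ^ (2 : ℝ))) := by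
  rw [stdGaussDens, ofReal_mul, ofReal_inv, Real.rpow_two, sq_abs, neg_div, div_eq_inv_mul, one_div]

theorem integral_abs_cpow_mul_stdGaussDens {z : ℂ} (hz : -1 < z.re) :
    ∫ x : ℝ, ((|x| : ℝ) : ℂ) ^ z * (stdGaussDens x : ℂ) =
      2 ^ (z / 2) * Complex.Gamma ((z + 1) / 2) / √Real.pi := by
  have hre : 0 < ((z + 1) / (2 : ℝ)).re := by
    rw [div_ofReal_re, add_re, one_re]
    linarith
  have hsqrt : (√(2 * Real.pi) : ℂ) = 2 ^ (1 / 2 : ℂ) * √Real.pi := by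
    rw [Real.sqrt_mul zero_le_two, ofReal_mul, Real.sqrt_eq_rpow, ofReal_cpow zero_le_two]
    norm_num
  have hpow : ((1 / 2 : ℝ) : ℂ) ^ (-((z + 1) / 2)) = 2 ^ (z / 2) * 2 ^ (1 / 2 : ℂ) := by
    have harg : (2 : ℂ).arg ≠ Real.pi := ofNat_arg.trans_ne Real.pi_ne_zero.symm
    rw [one_div (2 : ℝ), ofReal_inv, ofReal_ofNat, inv_cpow _ _ harg, cpow_neg, inv_inv, add_div,
      cpow_add _ _ two_ne_zero]
  calc ∫ x : ℝ, ((|x| : ℝ) : ℂ) ^ z * (stdGaussDens x : ℂ)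
      = (√(2 * Real.pi) : ℂ)⁻¹ *
          ∫ x : ℝ, ((|x| : ℝ) : ℂ) ^ z * (Real.exp (-(1 / 2 * |x| ^ (2 : ℝ))) : ℂ) := by
        simp only [ofReal_stdGaussDens, mul_left_comm _ (√(2 * Real.pi) : ℂ)⁻¹,
          integral_const_mul]
    _ = (√(2 * Real.pi) : ℂ)⁻¹ *
          (2 ^ (z / 2) * 2 ^ (1 / 2 : ℂ) * Complex.Gamma ((z + 1) / 2)) := by
        rw [integral_abs_cpow_mul_exp_neg_mul_abs_rpow one_half_pos hre, ofReal_ofNat, hpow,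
          abs_two, ofReal_inv, ofReal_ofNat, mul_inv_cancel_left₀ two_ne_zero]
    _ = 2 ^ (z / 2) * Complex.Gamma ((z + 1) / 2) / √Real.pi := by
        rw [hsqrt]
        field_simp

theorem cexp_mul_log_sq_mul_I {x : ℝ} (hx : x ≠ 0) (t : ℂ) :
    Complex.exp (t * Real.log (x ^ 2) * I) = ((|x| : ℝ) : ℂ) ^ (2 * (I * t)) := by
  rw [cpow_def_of_ne_zero (ofReal_ne_zero.mpr (abs_ne_zero.mpr hx)), ← ofReal_log (abs_nonneg x),
    Real.log_abs, Real.log_pow]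
  push_cast
  ring_nf

theorem stmt15_general {t : ℂ} (ht : t.im < 1 / 2) :
    ∫ x : ℝ, Complex.exp (t * Real.log (x ^ 2) * I) * (stdGaussDens x : ℂ) =
      2 ^ (I * t) * Complex.Gamma (1 / 2 + I * t) / √Real.pi := by
  have hre : -1 < (2 * (I * t)).re := by
    simp only [mul_re, re_ofNat, im_ofNat, I_re, I_im]
    linarith
  calc ∫ x : ℝ, Complex.exp (t * Real.log (x ^ 2) * I) * (stdGaussDens x : ℂ)
      = ∫ x : ℝ, ((|x| : ℝ) : ℂ) ^ (2 * (I * t)) * (stdGaussDens x : ℂ) := by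
        refine integral_congr_ae ?_
        filter_upwards [Measure.ae_ne volume 0] with x hx
        rw [cexp_mul_log_sq_mul_I hx]
    _ = 2 ^ (2 * (I * t) / 2) * Complex.Gamma ((2 * (I * t) + 1) / 2) / √Real.pi :=
        integral_abs_cpow_mul_stdGaussDens hre
    _ = 2 ^ (I * t) * Complex.Gamma (1 / 2 + I * t) / √Real.pi := by
        rw [add_div, mul_div_cancel_left₀ _ two_ne_zero, add_comm]

/-- For `X ∼ N(0,1)`, `E[exp(i t log X²)] = 2^{it} Γ(1/2 + it)/√π`. -/
theorem stmt15 (t : ℝ) :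
    ∫ x : ℝ, Complex.exp ((t : ℂ) * Real.log (x ^ 2) * Complex.I) * (stdGaussDens x : ℂ)
      = (2 : ℂ) ^ (Complex.I * t) * Complex.Gamma (1 / 2 + Complex.I * t)
          / (Real.sqrt Real.pi : ℂ) := by
  exact stmt15_general (by rw [ofReal_im]; exact one_half_pos)
end
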